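/- Let n ≥ 1 and let f : ℝⁿ → ℝ be a smooth convex function whose Hessian D²f(x) is positive definite at every x ∈ ℝⁿ. Then the graph of f is an elliptic paraboloid (i.e. f(x) = ⟨x, A x⟩ + ⟨b, x⟩ + c for some positive definite symmetric n×n matrix A, b ∈ ℝⁿ, c ∈ ℝ) if and only if there exists a constant a > 0 such that V*_x(k) = a · k^{(n+2)/2} for all x ∈ ℝⁿ and all k > 0. -/

import Mathlib

open MeasureTheory Filter
open scoped RealInnerProductSpace Topology

/-- The Hessian matrix of `f : ℝⁿ → ℝ` at a point `x`, with entries the second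
partial derivatives of `f`. -/
noncomputable def hessianMatrix {n : ℕ} (f : EuclideanSpace ℝ (Fin n) → ℝ)
    (x : EuclideanSpace ℝ (Fin n)) : Matrix (Fin n) (Fin n) ℝ :=
  Matrix.of fun i j =>
    iteratedFDeriv ℝ 2 f x ![EuclideanSpace.single i 1, EuclideanSpace.single j 1]

/-!
Write `D_x(y)` for the height of the graph of `f` at `y` above its tangent hyperplane at `x`, so
that the volume law reads `∫ (k - D_x)⁺ = a k ^ ((d + 2) / 2)`. Letting `k → 0` forces `0 ≤ D_x`,
and integrating against `t² e ^ (-tk) dk` turns the law into `∫ e ^ (-t D_x) = C t ^ (-d / 2)` for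
every base point `x`. Let `Q_x` be half the Hessian of `f` at `x`, the second-order part of `D_x`.

* Differentiating at `t = 1`, the energy `∫ D_x e ^ (-D_x)` equals `(d / 2) C`.
* Moving the base point tilts `e ^ (-D_x)` by a linear form and leaves the mass `C` unchanged; to
  second order this bounds the covariance of the weight by the inverse Hessian, whence
  `∫ Q_x e ^ (-D_x) ≤ (d / 2) C`.
* Zooming in at `x` (`t → ∞`), Fatou's lemma gives `∫ e ^ (-Q_x) ≤ C`; in particular `Q_x` is
  positive definite.

These are the hypotheses of the Gibbs variational inequality with `D_x` the equilibrium energy, so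
its equality case yields `D_x = Q_x`: the function `f` is quadratic.
-/

section Bregman

variable {E : Type*} [NormedAddCommGroup E] [NormedSpace ℝ E] {f : E → ℝ}

/-- The Bregman divergence of `f`: the height of the graph of `f` at `y` above its tangent
hyperplane at `x`. -/
noncomputable def bregman (f : E → ℝ) (x y : E) : ℝ :=
  f y - f x - fderiv ℝ f x (y - x)

theorem bregman_self (f : E → ℝ) (x : E) : bregman f x x = 0 := by simp [bregman]

theorem continuous_bregman (hf : Continuous f) (x : E) : Continuous (bregman f x) := by
  unfold bregman
  fun_prop

theorem bregman_change_base (f : E → ℝ) (x x' y : E) :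
    bregman f x' y =
      bregman f x y - (fderiv ℝ f x' - fderiv ℝ f x) (y - x) + bregman f x' x := by
  simp only [bregman, map_sub, sub_apply]
  ring

theorem bregman_add_bregman_swap (f : E → ℝ) (x x' : E) :
    bregman f x x' + bregman f x' x = (fderiv ℝ f x' - fderiv ℝ f x) (x' - x) := by
  simp only [bregman, map_sub, sub_apply]
  ring

theorem hasFDerivAt_bregman (hf : Differentiable ℝ f) (x y : E) :
    HasFDerivAt (bregman f x) (fderiv ℝ f y - fderiv ℝ f x) y :=
  ((hf y).hasFDerivAt.sub_const (f x)).sub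
    ((fderiv ℝ f x).hasFDerivAt.comp y ((hasFDerivAt_id y).sub_const x))

theorem hasFDerivAt_fderiv_of_contDiff (hf : ContDiff ℝ 2 f) (x : E) :
    HasFDerivAt (fderiv ℝ f) (fderiv ℝ (fderiv ℝ f) x) x :=
  ((hf.fderiv_right (m := 1) (by norm_num)).differentiable (by norm_num) x).hasFDerivAt

theorem hessian_apply_comm (hf : ContDiff ℝ 2 f) (x u v : E) :
    fderiv ℝ (fderiv ℝ f) x u v = fderiv ℝ (fderiv ℝ f) x v u :=
  (hf.contDiffAt.isSymmSndFDerivAt (by simp)).eq u v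

theorem bregman_sub_isLittleO (hf : ContDiff ℝ 2 f) (x : E) :
    (fun y => bregman f x y - 1 / 2 * fderiv ℝ (fderiv ℝ f) x (y - x) (y - x)) =o[𝓝 x]
      fun y => ‖y - x‖ ^ 2 := by
  set B := fderiv ℝ (fderiv ℝ f) x
  have hderiv : ∀ y, HasFDerivAt (fun y => bregman f x y - 1 / 2 * B (y - x) (y - x))
      (fderiv ℝ f y - fderiv ℝ f x - B (y - x)) y := by
    intro y
    have hsub : HasFDerivAt (fun y => y - x) (.id ℝ E) y := (hasFDerivAt_id y).sub_const x
    have hquad := ((B.hasFDerivAt.comp y hsub).clm_apply hsub).const_mul (1 / 2)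
    refine ((hasFDerivAt_bregman (hf.differentiable (by norm_num)) x y).sub hquad).congr_fderiv ?_
    ext w
    have hsymm : ∀ v, B w v = B v w := hessian_apply_comm hf x w
    simp only [Function.comp_apply, map_sub, ContinuousLinearMap.comp_id, smul_add, sub_apply,
      add_apply, smul_apply, smul_eq_mul, ContinuousLinearMap.flip_apply, hsymm]
    ring
  have hlittle := (hasFDerivAt_fderiv_of_contDiff hf x).isLittleO
  have := convex_univ.isLittleO_pow_succ (n := 1) (Set.mem_univ x)
    (fun y _ => (hderiv y).hasFDerivWithinAt) (by simpa [nhdsWithin_univ] using hlittle.norm_right)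
  simpa [nhdsWithin_univ, bregman_self] using this

section Curve

variable {c : ℝ → E} {w x : E}

theorem tendsto_bregman_div_sq (hf : ContDiff ℝ 2 f) (hc : HasDerivAt c w 0) (hc0 : c 0 = x) :
    Tendsto (fun s => bregman f x (c s) / s ^ 2) (𝓝[≠] 0)
      (𝓝 (1 / 2 * fderiv ℝ (fderiv ℝ f) x w w)) := by
  set B := fderiv ℝ (fderiv ℝ f) x
  have hslope : Tendsto (fun s => s⁻¹ • (c s - x)) (𝓝[≠] 0) (𝓝 w) := by
    simpa [slope_fun_def, hc0] using hc.tendsto_slope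
  have hcx : Tendsto c (𝓝[≠] 0) (𝓝 x) :=
    hc0 ▸ hc.continuousAt.tendsto.mono_left nhdsWithin_le_nhds
  have hbigO : (fun s => ‖c s - x‖ ^ 2) =O[𝓝[≠] 0] fun s : ℝ => s ^ 2 := by
    have := hc.hasFDerivAt.isBigO_sub.mono (nhdsWithin_le_nhds (s := {0}ᶜ))
    simpa [hc0] using this.norm_left.pow 2
  have herror := (((bregman_sub_isLittleO hf x).comp_tendsto hcx).trans_isBigO
    hbigO).tendsto_div_nhds_zero
  have hmain : Tendsto (fun s => 1 / 2 * B (s⁻¹ • (c s - x)) (s⁻¹ • (c s - x))) (𝓝[≠] 0)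
      (𝓝 (1 / 2 * B w w)) :=
    ((show Continuous fun z => 1 / 2 * B z z by fun_prop).tendsto w).comp hslope
  have hsum := herror.add hmain
  rw [zero_add] at hsum
  refine hsum.congr' ?_
  filter_upwards [self_mem_nhdsWithin] with s (hs : s ≠ 0)
  simp only [Function.comp, map_smul, smul_apply, smul_eq_mul]
  field_simp
  ring

theorem tendsto_bregman_swap_div_sq (hf : ContDiff ℝ 2 f) (hc : HasDerivAt c w 0)
    (hc0 : c 0 = x) :
    Tendsto (fun s => bregman f (c s) x / s ^ 2) (𝓝[≠] 0)
      (𝓝 (1 / 2 * fderiv ℝ (fderiv ℝ f) x w w)) := by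
  subst hc0
  set B := fderiv ℝ (fderiv ℝ f) (c 0)
  have hslope : Tendsto (fun s => s⁻¹ • (c s - c 0)) (𝓝[≠] 0) (𝓝 w) := by
    simpa [slope_fun_def] using hc.tendsto_slope
  have hslope' : Tendsto (fun s => s⁻¹ • (fderiv ℝ f (c s) - fderiv ℝ f (c 0))) (𝓝[≠] 0)
      (𝓝 (B w)) := by
    simpa [slope_fun_def] using
      ((hasFDerivAt_fderiv_of_contDiff hf (c 0)).comp_hasDerivAt 0 hc).tendsto_slope
  have happly : Tendsto (fun s => (s⁻¹ • (fderiv ℝ f (c s) - fderiv ℝ f (c 0)))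
      (s⁻¹ • (c s - c 0))) (𝓝[≠] 0) (𝓝 (B w w)) :=
    (isBoundedBilinearMap_apply.continuous.tendsto (B w, w)).comp (hslope'.prodMk_nhds hslope)
  have hdiff := happly.sub (tendsto_bregman_div_sq hf hc rfl)
  rw [show B w w - 1 / 2 * B w w = 1 / 2 * B w w by ring] at hdiff
  refine hdiff.congr' ?_
  filter_upwards [self_mem_nhdsWithin] with s (hs : s ≠ 0)
  rw [eq_sub_of_add_eq' (bregman_add_bregman_swap f (c 0) (c s))]
  simp only [map_smul, smul_apply, smul_eq_mul]
  field_simp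

theorem hasDerivAt_add_smul_const (x w : E) (t : ℝ) :
    HasDerivAt (fun s : ℝ => x + s • w) w t := by
  simpa using ((hasDerivAt_id t).smul_const w).const_add x

theorem exists_curve_image_eq_line [CompleteSpace E] {F : Type*} [NormedAddCommGroup F]
    [NormedSpace ℝ F] {g : E → F} {g' : E ≃L[ℝ] F} (hg : HasStrictFDerivAt g (g' : E →L[ℝ] F) x)
    (w : E) :
    ∃ c : ℝ → E, c 0 = x ∧ HasDerivAt c w 0 ∧ ∀ᶠ s in 𝓝 0, g (c s) = g x + s • g' w := by
  have hline : HasDerivAt (fun s : ℝ => g x + s • g' w) (g' w) 0 :=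
    hasDerivAt_add_smul_const _ _ _
  have hline0 : Tendsto (fun s : ℝ => g x + s • g' w) (𝓝 0) (𝓝 (g x)) := by
    simpa using hline.continuousAt.tendsto
  refine ⟨fun s => hg.localInverse _ _ _ (g x + s • g' w), by simp, ?_,
    hline0.eventually hg.eventually_right_inverse⟩
  have hinv : HasFDerivAt (hg.localInverse _ _ _) (g'.symm : F →L[ℝ] E)
      (g x + (0 : ℝ) • g' w) := by
    simpa using hg.to_localInverse.hasFDerivAt
  simpa [Function.comp_def] using hinv.comp_hasDerivAt (0 : ℝ) hline

end Curve

end Bregman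

section Laplace

open ProbabilityTheory Real

variable {α : Type*} [MeasurableSpace α] {μ : Measure α} {D : α → ℝ} {a m : ℝ}

theorem setIntegral_lt_sub_eq_integral_max (hD : Measurable D) (k : ℝ) :
    ∫ y in {y | D y < k}, (k - D y) ∂μ = ∫ y, max (k - D y) 0 ∂μ := by
  rw [← integral_indicator (measurableSet_lt hD measurable_const)]
  congr 1
  ext y
  by_cases hy : D y < k
  · rw [Set.indicator_of_mem (by exact hy), max_eq_left (by linarith)]
  · rw [Set.indicator_of_notMem (by exact hy), max_eq_right (by linarith)]

theorem lintegral_ofReal_eq_ofReal_integral_max {g : α → ℝ} (hg : ∫ y, max (g y) 0 ∂μ ≠ 0) :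
    ∫⁻ y, ENNReal.ofReal (g y) ∂μ = ENNReal.ofReal (∫ y, max (g y) 0 ∂μ) := by
  rw [ofReal_integral_eq_lintegral_ofReal (not_imp_comm.1 integral_undef hg)
    (ae_of_all _ fun y => le_max_right _ _)]
  simp [ENNReal.ofReal_max]

theorem lintegral_ofReal_sub_of_power_law (ha : 0 < a)
    (h : ∀ k, 0 < k → ∫ y, max (k - D y) 0 ∂μ = a * k ^ m) {k : ℝ} (hk : 0 < k) :
    ∫⁻ y, ENNReal.ofReal (k - D y) ∂μ = ENNReal.ofReal (a * k ^ m) := by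
  have hpos : 0 < a * k ^ m := by positivity
  rw [lintegral_ofReal_eq_ofReal_integral_max (by rw [h k hk]; exact hpos.ne'), h k hk]

theorem ae_nonneg_of_power_law (hD : Measurable D) (ha : 0 < a) (hm : 0 < m)
    (h : ∀ k, 0 < k → ∫ y, max (k - D y) 0 ∂μ = a * k ^ m) : ∀ᵐ y ∂μ, 0 ≤ D y := by
  have hbound : ∀ᶠ k in 𝓝[>] (0 : ℝ),
      ∫⁻ y, ENNReal.ofReal (-D y) ∂μ ≤ ENNReal.ofReal (a * k ^ m) := by
    filter_upwards [self_mem_nhdsWithin] with k (hk : 0 < k)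
    rw [← lintegral_ofReal_sub_of_power_law ha h hk]
    exact lintegral_mono fun y => ENNReal.ofReal_le_ofReal (by linarith)
  have hlim : Tendsto (fun k : ℝ => ENNReal.ofReal (a * k ^ m)) (𝓝[>] 0) (𝓝 0) := by
    have : Tendsto (fun k : ℝ => ENNReal.ofReal (a * k ^ m)) (𝓝 0)
        (𝓝 (ENNReal.ofReal (a * 0 ^ m))) :=
      ENNReal.tendsto_ofReal (((continuous_rpow_const hm.le).tendsto 0).const_mul a)
    simpa [zero_rpow hm.ne'] using this.mono_left nhdsWithin_le_nhds
  have hzero := (lintegral_eq_zero_iff (by fun_prop)).1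
    (nonpos_iff_eq_zero.1 (ge_of_tendsto hlim hbound))
  filter_upwards [hzero] with y hy
  simpa using hy

theorem integral_Ioi_sub_mul_exp_neg {t : ℝ} (ht : 0 < t) (r : ℝ) :
    IntegrableOn (fun k => (k - r) * (t ^ 2 * exp (-(t * k)))) (Set.Ioi r) ∧
      ∫ k in Set.Ioi r, (k - r) * (t ^ 2 * exp (-(t * k))) = exp (-(t * r)) := by
  have hderiv : ∀ k ∈ Set.Ici r, HasDerivAt (fun k => -((t * (k - r) + 1) * exp (-(t * k))))
      ((k - r) * (t ^ 2 * exp (-(t * k)))) k := by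
    intro k _
    have hlin : HasDerivAt (fun k => t * (k - r) + 1) t k := by
      simpa using (((hasDerivAt_id k).sub_const r).const_mul t).add_const 1
    have hexp : HasDerivAt (fun k => exp (-(t * k))) (exp (-(t * k)) * -t) k := by
      simpa using (((hasDerivAt_id k).const_mul t).neg).exp
    refine (hlin.mul hexp).neg.congr_deriv ?_
    ring
  have hnonneg : ∀ k ∈ Set.Ioi r, 0 ≤ (k - r) * (t ^ 2 * exp (-(t * k))) := by
    intro k hk
    have : 0 ≤ k - r := sub_nonneg.2 (le_of_lt hk)
    positivity
  have hlim : Tendsto (fun k => -((t * (k - r) + 1) * exp (-(t * k)))) atTop (𝓝 0) := by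
    have htk : Tendsto (fun k : ℝ => t * k) atTop atTop := tendsto_id.const_mul_atTop ht
    have hlin : Tendsto (fun k : ℝ => t * k * exp (-(t * k))) atTop (𝓝 0) := by
      simpa [Function.comp_def] using (tendsto_pow_mul_exp_neg_atTop_nhds_zero 1).comp htk
    have hconst : Tendsto (fun k : ℝ => exp (-(t * k))) atTop (𝓝 0) :=
      tendsto_exp_neg_atTop_nhds_zero.comp htk
    have hsum := (hlin.add (hconst.const_mul (1 - t * r))).neg
    simp only [mul_zero, add_zero, neg_zero] at hsum
    refine hsum.congr fun k => ?_
    ring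
  refine ⟨integrableOn_Ioi_deriv_of_nonneg' hderiv hnonneg hlim, ?_⟩
  rw [integral_Ioi_of_hasDerivAt_of_nonneg' hderiv hnonneg hlim]
  simp

theorem lintegral_Ioi_ofReal_sub_mul_exp_neg {r t : ℝ} (hr : 0 ≤ r) (ht : 0 < t) :
    ∫⁻ k in Set.Ioi 0, ENNReal.ofReal (k - r) * ENNReal.ofReal (t ^ 2 * exp (-(t * k))) =
      ENNReal.ofReal (exp (-(t * r))) := by
  have hnonneg : ∀ k ∈ Set.Ioi r, 0 ≤ (k - r) * (t ^ 2 * exp (-(t * k))) := fun k hk =>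
    mul_nonneg (sub_nonneg.2 (le_of_lt hk)) (by positivity)
  obtain ⟨hint, heq⟩ := integral_Ioi_sub_mul_exp_neg ht r
  rw [← heq, ofReal_integral_eq_lintegral_ofReal hint
    ((ae_restrict_iff' measurableSet_Ioi).2 (ae_of_all _ hnonneg)),
    ← lintegral_indicator measurableSet_Ioi, ← lintegral_indicator measurableSet_Ioi]
  refine lintegral_congr fun k => ?_
  by_cases hk : r < k
  · rw [Set.indicator_of_mem (Set.mem_Ioi.2 (hr.trans_lt hk)),
      Set.indicator_of_mem (Set.mem_Ioi.2 hk),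
      ← ENNReal.ofReal_mul (by linarith)]
  · simp [Set.indicator, hk, ENNReal.ofReal_of_nonpos (show k - r ≤ 0 by linarith)]

theorem lintegral_exp_neg_mul_eq_lintegral_Ioi [SFinite μ] (hD : Measurable D)
    (hD0 : ∀ᵐ y ∂μ, 0 ≤ D y) {t : ℝ} (ht : 0 < t) :
    ∫⁻ y, ENNReal.ofReal (exp (-(t * D y))) ∂μ =
      ∫⁻ k in Set.Ioi 0,
        (∫⁻ y, ENNReal.ofReal (k - D y) ∂μ) * ENNReal.ofReal (t ^ 2 * exp (-(t * k))) := by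
  calc ∫⁻ y, ENNReal.ofReal (exp (-(t * D y))) ∂μ
      = ∫⁻ y, (∫⁻ k in Set.Ioi 0,
          ENNReal.ofReal (k - D y) * ENNReal.ofReal (t ^ 2 * exp (-(t * k)))) ∂μ :=
        lintegral_congr_ae <| hD0.mono fun y hy =>
          (lintegral_Ioi_ofReal_sub_mul_exp_neg hy ht).symm
    _ = ∫⁻ k in Set.Ioi 0, ∫⁻ y,
          ENNReal.ofReal (k - D y) * ENNReal.ofReal (t ^ 2 * exp (-(t * k))) ∂μ := by
        refine lintegral_lintegral_swap (Measurable.aemeasurable ?_)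
        unfold Function.uncurry
        fun_prop
    _ = _ := lintegral_congr fun k => lintegral_mul_const _ (by fun_prop)

theorem integral_Ioi_rpow_mul_sq_mul_exp_neg (hm : 0 < m) {t : ℝ} (ht : 0 < t) :
    IntegrableOn (fun k => k ^ m * (t ^ 2 * exp (-(t * k)))) (Set.Ioi 0) ∧
      ∫ k in Set.Ioi 0, k ^ m * (t ^ 2 * exp (-(t * k))) = Gamma (m + 1) * t ^ (-(m - 1)) := by
  have hcomm : ∀ k : ℝ, k ^ m * (t ^ 2 * exp (-(t * k))) = t ^ 2 * (k ^ m * exp (-(t * k))) :=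
    fun k => by ring
  simp only [hcomm]
  constructor
  · have := integrableOn_rpow_mul_exp_neg_mul_rpow (p := 1) (s := m) (by linarith) one_pos ht
    simpa [IntegrableOn] using this.const_mul (t ^ 2)
  · have hGamma := integral_rpow_mul_exp_neg_mul_Ioi (a := m + 1) (by linarith) ht
    rw [add_sub_cancel_right] at hGamma
    rw [integral_const_mul, hGamma, one_div, inv_rpow ht.le, ← rpow_neg ht.le, ← rpow_natCast t 2,
      show -(m - 1) = ((2 : ℕ) : ℝ) + -(m + 1) by push_cast; ring, rpow_add ht]
    ring

/-- The Laplace transform of the distribution of `D` under `μ` is finite and equal to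
`t ↦ C * t ^ (-p)`; the volume law enters the argument in this form. Integrability is a field
because the Bochner integral of a non-integrable function is `0`. -/
structure HasPowerLaplaceTransform (μ : Measure α) (D : α → ℝ) (C p : ℝ) : Prop where
  integrable : ∀ t, 0 < t → Integrable (fun y => exp (-(t * D y))) μ
  integral_eq : ∀ t, 0 < t → ∫ y, exp (-(t * D y)) ∂μ = C * t ^ (-p)

theorem hasPowerLaplaceTransform_of_power_law [SFinite μ] (hD : Measurable D) (ha : 0 < a)
    (hm : 0 < m) (h : ∀ k, 0 < k → ∫ y, max (k - D y) 0 ∂μ = a * k ^ m) :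
    HasPowerLaplaceTransform μ D (a * Gamma (m + 1)) (m - 1) := by
  have hlintegral : ∀ t, 0 < t → ∫⁻ y, ENNReal.ofReal (exp (-(t * D y))) ∂μ =
      ENNReal.ofReal (a * Gamma (m + 1) * t ^ (-(m - 1))) := by
    intro t ht
    obtain ⟨hint, heq⟩ := integral_Ioi_rpow_mul_sq_mul_exp_neg hm ht
    rw [lintegral_exp_neg_mul_eq_lintegral_Ioi hD (ae_nonneg_of_power_law hD ha hm h) ht,
      mul_assoc, ← heq, ← integral_const_mul, ofReal_integral_eq_lintegral_ofReal
        (hint.const_mul a) ((ae_restrict_iff' measurableSet_Ioi).2 (ae_of_all _ fun k hk => ?_))]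
    · refine setLIntegral_congr_fun measurableSet_Ioi fun k (hk : 0 < k) => ?_
      rw [lintegral_ofReal_sub_of_power_law ha h hk, ← ENNReal.ofReal_mul (by positivity),
        mul_assoc]
    · have hk : 0 < k := hk
      positivity
  have hint : ∀ t, 0 < t → Integrable (fun y => exp (-(t * D y))) μ := fun t ht =>
    (lintegral_ofReal_ne_top_iff_integrable (by fun_prop)
      (ae_of_all _ fun y => (exp_pos _).le)).1 (by simp [hlintegral t ht])
  refine ⟨hint, fun t ht => ?_⟩
  have := Gamma_pos_of_pos (by linarith : 0 < m + 1)
  rw [integral_eq_lintegral_of_nonneg_ae (ae_of_all _ fun y => (exp_pos _).le)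
    (hint t ht).aestronglyMeasurable, hlintegral t ht, ENNReal.toReal_ofReal (by positivity)]

namespace HasPowerLaplaceTransform

variable {C p : ℝ}

theorem integrable_exp_neg (h : HasPowerLaplaceTransform μ D C p) :
    Integrable (fun y => exp (-D y)) μ := by
  simpa using h.integrable 1 one_pos

theorem integral_exp_neg (h : HasPowerLaplaceTransform μ D C p) : ∫ y, exp (-D y) ∂μ = C := by
  simpa using h.integral_eq 1 one_pos

theorem neg_one_mem_interior_integrableExpSet (h : HasPowerLaplaceTransform μ D C p) :
    -1 ∈ interior (integrableExpSet D μ) :=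
  mem_interior.2 ⟨Set.Iio 0, fun t (ht : t < 0) => by
    simpa [integrableExpSet] using h.integrable (-t) (neg_pos.2 ht), isOpen_Iio, by simp⟩

theorem integrable_mul_exp_neg (h : HasPowerLaplaceTransform μ D C p) :
    Integrable (fun y => D y * exp (-D y)) μ := by
  simpa using
    integrable_pow_mul_exp_of_mem_interior_integrableExpSet
      h.neg_one_mem_interior_integrableExpSet 1

theorem integral_mul_exp_neg (h : HasPowerLaplaceTransform μ D C p) :
    ∫ y, D y * exp (-D y) ∂μ = p * C := by
  have hmgf : HasDerivAt (mgf D μ) (∫ y, D y * exp (-1 * D y) ∂μ) (-1) :=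
    hasDerivAt_mgf h.neg_one_mem_interior_integrableExpSet
  have hpow : HasDerivAt (fun t : ℝ => C * (-t) ^ (-p)) (p * C) (-1) := by
    refine (((hasDerivAt_neg (-1 : ℝ)).rpow_const (p := -p) (by simp)).const_mul C).congr_deriv ?_
    simp only [mul_neg, neg_mul, one_mul, neg_neg, one_rpow, mul_one]
    ring
  have heq : mgf D μ =ᶠ[𝓝 (-1)] fun t => C * (-t) ^ (-p) := by
    filter_upwards [Iio_mem_nhds (show (-1 : ℝ) < 0 by norm_num)] with t (ht : t < 0)
    simpa [mgf] using h.integral_eq (-t) (neg_pos.2 ht)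
  simpa using hmgf.unique (hpow.congr_of_eventuallyEq heq)

end HasPowerLaplaceTransform

end Laplace

section Gibbs

open Real

variable {α : Type*} [MeasurableSpace α] {μ : Measure α}

-- The equality case of the Gibbs variational principle: integrate `exp u ≥ 1 + u`
-- for `u = P - Q` against the weight `exp (-P)`.
theorem ae_eq_of_integral_exp_neg_le {P Q : α → ℝ} (hP : Integrable (fun y => exp (-P y)) μ)
    (hQ : Integrable (fun y => exp (-Q y)) μ) (hPP : Integrable (fun y => P y * exp (-P y)) μ)
    (hQP : Integrable (fun y => Q y * exp (-P y)) μ)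
    (hpartition : ∫ y, exp (-Q y) ∂μ ≤ ∫ y, exp (-P y) ∂μ)
    (henergy : ∫ y, Q y * exp (-P y) ∂μ ≤ ∫ y, P y * exp (-P y) ∂μ) : P =ᵐ[μ] Q := by
  have hfactor : ∀ y, (exp (-Q y) - exp (-P y)) - (P y * exp (-P y) - Q y * exp (-P y)) =
      exp (-P y) * (exp (P y - Q y) - (P y - Q y + 1)) := by
    intro y
    have : exp (-Q y) = exp (-P y) * exp (P y - Q y) := by rw [← exp_add]; ring_nf
    rw [this]
    ring
  have hnonneg : ∀ y,
      0 ≤ (exp (-Q y) - exp (-P y)) - (P y * exp (-P y) - Q y * exp (-P y)) := fun y => by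
    rw [hfactor]
    exact mul_nonneg (exp_pos _).le (sub_nonneg.2 (add_one_le_exp _))
  have hzero : ∫ y, ((exp (-Q y) - exp (-P y)) - (P y * exp (-P y) - Q y * exp (-P y))) ∂μ = 0 := by
    refine le_antisymm ?_ (integral_nonneg hnonneg)
    rw [integral_sub (hQ.sub' hP) (hPP.sub' hQP), integral_sub hQ hP, integral_sub hPP hQP]
    linarith
  filter_upwards [(integral_eq_zero_iff_of_nonneg hnonneg ((hQ.sub hP).sub (hPP.sub hQP))).1 hzero]
    with y hy
  rw [hfactor, Pi.zero_apply, mul_eq_zero, or_iff_right (exp_pos _).ne'] at hy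
  by_contra hne
  linarith [add_one_lt_exp (sub_ne_zero.2 hne)]

theorem one_add_sq_div_two_le_cosh (u : ℝ) : 1 + u ^ 2 / 2 ≤ cosh u := by
  have hsinh : (u / 2) ^ 2 ≤ sinh (u / 2) ^ 2 := by
    rw [sq_le_sq, abs_sinh]
    exact self_le_sinh_iff.2 (abs_nonneg _)
  have hcosh := cosh_two_mul (u / 2)
  rw [mul_div_cancel₀ u two_ne_zero, cosh_sq] at hcosh
  linarith

theorem sq_mul_sq_mul_exp_neg_le (s φ D : ℝ) :
    s ^ 2 * (φ ^ 2 * exp (-D)) ≤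
      (exp (s * φ - D) - exp (-D)) + (exp (-s * φ - D) - exp (-D)) := by
  have hcosh := one_add_sq_div_two_le_cosh (s * φ)
  rw [cosh_eq] at hcosh
  rw [sub_eq_add_neg (s * φ), sub_eq_add_neg (-s * φ), exp_add, exp_add, neg_mul]
  nlinarith [exp_pos (-D)]

theorem integral_sq_mul_exp_neg_le {φ D : α → ℝ} (hφ : AEStronglyMeasurable φ μ) {l : ℝ}
    (hint : ∀ᶠ s in 𝓝 (0 : ℝ), Integrable (fun y => exp (s * φ y - D y)) μ)
    (hlim : Tendsto (fun s => (∫ y, exp (s * φ y - D y) ∂μ - ∫ y, exp (-D y) ∂μ) / s ^ 2) (𝓝[≠] 0)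
      (𝓝 l)) :
    Integrable (fun y => φ y ^ 2 * exp (-D y)) μ ∧
      ∫ y, φ y ^ 2 * exp (-D y) ∂μ ≤ 2 * l := by
  set Z : ℝ → ℝ := fun s => ∫ y, exp (s * φ y - D y) ∂μ
  have hint0 : Integrable (fun y => exp (-D y)) μ := by simpa using hint.self_of_nhds
  have hneg : Tendsto Neg.neg (𝓝 (0 : ℝ)) (𝓝 0) := by simpa using (continuous_neg.tendsto (0 : ℝ))
  have hneg' : Tendsto Neg.neg (𝓝[≠] (0 : ℝ)) (𝓝[≠] 0) :=
    tendsto_nhdsWithin_iff.2 ⟨hneg.mono_left nhdsWithin_le_nhds, by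
      filter_upwards [self_mem_nhdsWithin] with s hs using by simpa using hs⟩
  have hbound : ∀ᶠ s in 𝓝[≠] (0 : ℝ), Integrable (fun y => φ y ^ 2 * exp (-D y)) μ ∧
      ∫ y, φ y ^ 2 * exp (-D y) ∂μ ≤
        (Z s - ∫ y, exp (-D y) ∂μ) / s ^ 2 + (Z (-s) - ∫ y, exp (-D y) ∂μ) / (-s) ^ 2 := by
    filter_upwards [self_mem_nhdsWithin, hint.filter_mono nhdsWithin_le_nhds,
      (hneg.eventually hint).filter_mono nhdsWithin_le_nhds] with s (hs : s ≠ 0) hs1 hs2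
    have hs0 : 0 < s ^ 2 := by positivity
    have hdom := (hs1.sub' hint0).fun_add (hs2.sub' hint0)
    have hsq : Integrable (fun y => s ^ 2 * (φ y ^ 2 * exp (-D y))) μ :=
      hdom.mono' (((hφ.pow 2).mul hint0.aestronglyMeasurable).const_mul _) <|
        ae_of_all _ fun y => by
        rw [norm_of_nonneg (by positivity)]
        exact sq_mul_sq_mul_exp_neg_le s (φ y) (D y)
    refine ⟨(integrable_const_mul_iff hs0.ne'.isUnit _).1 hsq, ?_⟩
    rw [neg_sq, ← add_div, le_div_iff₀' hs0, ← integral_const_mul, ← integral_sub hs1 hint0,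
      ← integral_sub hs2 hint0, ← integral_add (hs1.sub' hint0) (hs2.sub' hint0)]
    exact integral_mono hsq hdom fun y => sq_mul_sq_mul_exp_neg_le s (φ y) (D y)
  refine ⟨hbound.exists.choose_spec.1, ?_⟩
  rw [two_mul]
  exact ge_of_tendsto (hlim.add (hlim.comp hneg')) (hbound.mono fun s hs => hs.2)

theorem tendsto_exp_sub_one_div_sq {g : ℝ → ℝ} {l : ℝ}
    (hg : Tendsto (fun s => g s / s ^ 2) (𝓝[≠] 0) (𝓝 l)) :
    Tendsto (fun s => (exp (g s) - 1) / s ^ 2) (𝓝[≠] 0) (𝓝 l) := by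
  have hg0 : Tendsto g (𝓝[≠] 0) (𝓝 0) := by
    have hsq : Tendsto (fun s : ℝ => s ^ 2) (𝓝[≠] 0) (𝓝 0) := by
      simpa using ((continuous_pow 2).tendsto (0 : ℝ)).mono_left nhdsWithin_le_nhds
    have := hg.mul hsq
    rw [mul_zero] at this
    refine this.congr' ?_
    filter_upwards [self_mem_nhdsWithin] with s (hs : s ≠ 0)
    field_simp
  have hslope : Tendsto (fun s => dslope exp 0 (g s)) (𝓝[≠] 0) (𝓝 1) := by
    have := (continuousAt_dslope_same.2 differentiableAt_exp).tendsto.comp hg0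
    simpa [Function.comp_def] using this
  have hmul := hg.mul hslope
  rw [mul_one] at hmul
  refine hmul.congr fun s => ?_
  have := sub_smul_dslope exp 0 (g s)
  simp only [sub_zero, smul_eq_mul, exp_zero] at this
  rw [← this]
  ring

end Gibbs

section Scaling

open Real

theorem integrable_and_integral_le_of_tendsto {α ι : Type*} [MeasurableSpace α] {μ : Measure α}
    {u : Filter ι} [u.NeBot] [u.IsCountablyGenerated] {G : ι → α → ℝ} {g : α → ℝ} {C : ℝ}
    (hmeas : ∀ i, AEMeasurable (G i) μ) (hnonneg : ∀ i y, 0 ≤ G i y)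
    (hint : ∀ᶠ i in u, Integrable (G i) μ ∧ ∫ y, G i y ∂μ ≤ C)
    (hlim : ∀ y, Tendsto (fun i => G i y) u (𝓝 (g y))) :
    Integrable g μ ∧ ∫ y, g y ∂μ ≤ C := by
  have hg0 : ∀ y, 0 ≤ g y := fun y => ge_of_tendsto' (hlim y) fun i => hnonneg i y
  have hgmeas : AEMeasurable g μ := aemeasurable_of_tendsto_metrizable_ae u hmeas (ae_of_all _ hlim)
  have hC : 0 ≤ C := by
    obtain ⟨i, -, hi⟩ := hint.exists
    exact (integral_nonneg (hnonneg i)).trans hi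
  have hle : ∫⁻ y, ENNReal.ofReal (g y) ∂μ ≤ ENNReal.ofReal C :=
    calc ∫⁻ y, ENNReal.ofReal (g y) ∂μ
        = ∫⁻ y, liminf (fun i => ENNReal.ofReal (G i y)) u ∂μ :=
          lintegral_congr fun y => (ENNReal.tendsto_ofReal (hlim y)).liminf_eq.symm
      _ ≤ liminf (fun i => ∫⁻ y, ENNReal.ofReal (G i y) ∂μ) u :=
          lintegral_liminf_le' fun i => (hmeas i).ennreal_ofReal
      _ ≤ ENNReal.ofReal C := by
          refine liminf_le_of_frequently_le' (hint.mono fun i hi => ?_).frequently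
          rw [← ofReal_integral_eq_lintegral_ofReal hi.1 (ae_of_all _ (hnonneg i))]
          exact ENNReal.ofReal_le_ofReal hi.2
  have hgint : Integrable g μ :=
    (lintegral_ofReal_ne_top_iff_integrable hgmeas.aestronglyMeasurable (ae_of_all _ hg0)).1
      (hle.trans_lt ENNReal.ofReal_lt_top).ne
  refine ⟨hgint, (ENNReal.ofReal_le_ofReal_iff hC).1 ?_⟩
  rwa [ofReal_integral_eq_lintegral_ofReal hgint (ae_of_all _ hg0)]

variable {E : Type*} [NormedAddCommGroup E] [NormedSpace ℝ E] [MeasurableSpace E] [BorelSpace E]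
  {μ : Measure E} [μ.IsAddHaarMeasure]

theorem not_integrable_of_periodic {g : E → ℝ} {v : E} (hv : v ≠ 0) (hg : Measurable g)
    (hpos : ∀ z, 0 < g z) (hper : ∀ z, g (z + v) = g z) : ¬ Integrable g μ := by
  intro hint
  set ν := μ.withDensity fun z => ENNReal.ofReal (g z) with hν
  have : IsFiniteMeasure ν := isFiniteMeasure_withDensity_ofReal hint.2
  have hshift : MeasurePreserving (· + v) ν ν := by
    refine ⟨by fun_prop, ?_⟩
    ext s hs
    rw [Measure.map_apply (by fun_prop) hs, withDensity_apply _ hs,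
      withDensity_apply _ (measurable_add_const v hs), ← lintegral_indicator hs,
      ← lintegral_indicator (measurable_add_const v hs),
      ← lintegral_add_right_eq_self (s.indicator _) v]
    refine lintegral_congr fun z => ?_
    simp only [Set.indicator, hper]
    rfl
  have hball : ν (Metric.ball 0 (‖v‖ / 2)) ≠ 0 := by
    rw [hν, Ne, withDensity_apply_eq_zero hg.ennreal_ofReal]
    have hball := Metric.measure_ball_pos μ (0 : E) (half_pos (norm_pos_iff.2 hv))
    simpa [hpos] using hball.ne'
  obtain ⟨z, hz, m, hm, hmz⟩ :=
    hshift.exists_mem_iterate_mem measurableSet_ball.nullMeasurableSet hball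
  rw [add_right_iterate, mem_ball_zero_iff] at hmz
  rw [mem_ball_zero_iff] at hz
  have hfar : ‖v‖ ≤ ‖m • v‖ := by
    rw [RCLike.norm_nsmul ℝ, nsmul_eq_mul]
    exact le_mul_of_one_le_left (norm_nonneg v) (by exact_mod_cast Nat.one_le_iff_ne_zero.2 hm)
  have htri : ‖m • v‖ ≤ ‖z + m • v‖ + ‖z‖ := by
    simpa using norm_sub_le (z + m • v) z
  linarith

variable [FiniteDimensional ℝ E]

theorem HasPowerLaplaceTransform.rescale {D : E → ℝ} {C : ℝ}
    (h : HasPowerLaplaceTransform μ D C ((Module.finrank ℝ E : ℝ) / 2)) (x : E) {s : ℝ}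
    (hs : 0 < s) :
    Integrable (fun z => exp (-(D (x + s • z) / s ^ 2))) μ ∧
      ∫ z, exp (-(D (x + s • z) / s ^ 2)) ∂μ = C := by
  have hpos : 0 < (s ^ 2)⁻¹ := by positivity
  simp only [div_eq_inv_mul]
  refine ⟨((h.integrable _ hpos).comp_add_left x).comp_smul hs.ne', ?_⟩
  rw [Measure.integral_comp_smul μ (fun y => exp (-((s ^ 2)⁻¹ * D (x + y)))),
    integral_add_left_eq_self (fun y => exp (-((s ^ 2)⁻¹ * D y))), h.integral_eq _ hpos,
    ← rpow_natCast s 2, ← rpow_neg hs.le, ← rpow_mul hs.le, Nat.cast_ofNat, neg_mul_neg,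
    mul_div_cancel₀ _ two_ne_zero, rpow_natCast, abs_of_pos (by positivity), smul_eq_mul]
  field_simp

theorem HasPowerLaplaceTransform.integral_exp_neg_le_of_tendsto_div_sq {D q : E → ℝ} {C : ℝ}
    (h : HasPowerLaplaceTransform μ D C ((Module.finrank ℝ E : ℝ) / 2)) (hD : Measurable D) {x : E}
    (hq : ∀ z, Tendsto (fun s : ℝ => D (x + s • z) / s ^ 2) (𝓝[>] 0) (𝓝 (q z))) :
    Integrable (fun z => exp (-q z)) μ ∧ ∫ z, exp (-q z) ∂μ ≤ C :=
  integrable_and_integral_le_of_tendsto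
    (fun s => by fun_prop) (fun s z => (exp_pos _).le)
    (by
      filter_upwards [self_mem_nhdsWithin] with s (hs : 0 < s)
      exact (h.rescale x hs).imp_right le_of_eq)
    fun z => (continuous_exp.tendsto _).comp (hq z).neg

end Scaling

section Rigidity

open Real Module

theorem exists_basis_sum_sq_eq_of_pos {V : Type*} [AddCommGroup V] [Module ℝ V]
    [FiniteDimensional ℝ V] {B : LinearMap.BilinForm ℝ V} (hB : LinearMap.IsSymm B)
    (hpos : ∀ z ≠ 0, 0 < B z z) :
    ∃ v : Basis (Fin (finrank ℝ V)) ℝ V, (∀ i, B (v i) (v i) = 1) ∧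
      ∀ z, B z z = ∑ i, B (v i) z ^ 2 := by
  have : Invertible (2 : ℝ) := invertibleOfNonzero two_ne_zero
  obtain ⟨u, hu⟩ := LinearMap.BilinForm.exists_orthogonal_basis hB
  have hupos : ∀ i, 0 < B (u i) (u i) := fun i => hpos _ (u.ne_zero i)
  have hsqrt : ∀ i, √(B (u i) (u i)) ≠ 0 := fun i => (sqrt_pos.2 (hupos i)).ne'
  set v := u.isUnitSMul fun i => (inv_ne_zero (hsqrt i)).isUnit with hv
  have hnorm : ∀ i, B (v i) (v i) = 1 := by
    intro i
    simp only [hv, Basis.isUnitSMul_apply, map_smul, LinearMap.smul_apply, smul_eq_mul]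
    rw [← mul_assoc, ← mul_inv, mul_self_sqrt (hupos i).le, inv_mul_cancel₀ (hupos i).ne']
  have hortho : ∀ i j, B (v i) (v j) = if i = j then 1 else 0 := by
    intro i j
    split_ifs with hij
    · rw [← hij, hnorm]
    · have : B (u i) (u j) = 0 := hu hij
      simp [hv, Basis.isUnitSMul_apply, this]
  have hcoord : ∀ i z, B (v i) z = v.repr z i := by
    intro i z
    conv_lhs => rw [← v.sum_repr z, map_sum]
    simp [hortho]
  refine ⟨v, hnorm, fun z => ?_⟩
  calc B z z = B (∑ i, v.repr z i • v i) z := by rw [v.sum_repr]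
    _ = ∑ i, B (v i) z ^ 2 := by
      simp only [map_sum, map_smul, LinearMap.sum_apply, LinearMap.smul_apply, smul_eq_mul, hcoord,
        sq]

variable {E : Type*} [NormedAddCommGroup E] [NormedSpace ℝ E] {f : E → ℝ} {x : E}

theorem hessian_apply_self_nonneg (hf : ContDiff ℝ 2 f) (hD : ∀ y, 0 ≤ bregman f x y) (w : E) :
    0 ≤ fderiv ℝ (fderiv ℝ f) x w w := by
  have := ge_of_tendsto' (tendsto_bregman_div_sq hf (hasDerivAt_add_smul_const x w 0) (by simp))
    fun s => div_nonneg (hD (x + s • w)) (sq_nonneg s)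
  linarith

variable [FiniteDimensional ℝ E]

theorem exists_curve_fderiv_eq_line (hf : ContDiff ℝ 2 f)
    (hpos : ∀ z ≠ 0, 0 < fderiv ℝ (fderiv ℝ f) x z z) (w : E) :
    ∃ c : ℝ → E, c 0 = x ∧ HasDerivAt c w 0 ∧
      ∀ᶠ s in 𝓝 0, fderiv ℝ f (c s) = fderiv ℝ f x + s • fderiv ℝ (fderiv ℝ f) x w := by
  have hinj : Function.Injective (fderiv ℝ (fderiv ℝ f) x : E →ₗ[ℝ] E →L[ℝ] ℝ) := by
    refine (injective_iff_map_eq_zero _).2 fun z hz => ?_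
    by_contra hne
    have hz : fderiv ℝ (fderiv ℝ f) x z = 0 := hz
    simpa [hz] using hpos z hne
  have hfinrank : finrank ℝ E = finrank ℝ (E →L[ℝ] ℝ) := by
    rw [← (LinearMap.toContinuousLinearMap (𝕜 := ℝ) (E := E) (F' := ℝ)).finrank_eq,
      Subspace.dual_finrank_eq]
  set B := (LinearEquiv.ofInjectiveOfFinrankEq _ hinj hfinrank).toContinuousLinearEquiv
  have hstrict : HasStrictFDerivAt (fderiv ℝ f) (B : E →L[ℝ] E →L[ℝ] ℝ) x :=
    (hf.fderiv_right (m := 1) (by norm_num)).contDiffAt.hasStrictFDerivAt (by norm_num)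
  exact exists_curve_image_eq_line hstrict w

variable [MeasurableSpace E] [BorelSpace E] {μ : Measure E} {C : ℝ}

-- Tilting the weight `exp (-D_x)` by the linear form `s • D²f(x) w` moves the base point along a
-- curve with velocity `w`; the mass of the tilted weight to second order in `s` is the variance.
theorem integral_hessian_sq_mul_exp_neg_bregman_le (hf : ContDiff ℝ 2 f)
    (hint : ∀ x, Integrable (fun y => exp (-bregman f x y)) μ)
    (hZ : ∀ x, ∫ y, exp (-bregman f x y) ∂μ = C)
    (hpos : ∀ z ≠ 0, 0 < fderiv ℝ (fderiv ℝ f) x z z) (w : E) :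
    Integrable (fun y => fderiv ℝ (fderiv ℝ f) x w (y - x) ^ 2 * exp (-bregman f x y)) μ ∧
      ∫ y, fderiv ℝ (fderiv ℝ f) x w (y - x) ^ 2 * exp (-bregman f x y) ∂μ ≤
        C * fderiv ℝ (fderiv ℝ f) x w w := by
  obtain ⟨c, hc0, hc, hline⟩ := exists_curve_fderiv_eq_line hf hpos w
  set B := fderiv ℝ (fderiv ℝ f) x
  have htilt : ∀ᶠ s in 𝓝 0, ∀ y, exp (s * B w (y - x) - bregman f x y) =
      exp (bregman f (c s) x) * exp (-bregman f (c s) y) := by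
    filter_upwards [hline] with s hs y
    rw [bregman_change_base f x (c s) y, hs, add_sub_cancel_left, smul_apply, smul_eq_mul,
      ← exp_add]
    congr 1
    ring
  have htilt_int : ∀ᶠ s in 𝓝 0, Integrable (fun y => exp (s * B w (y - x) - bregman f x y)) μ := by
    filter_upwards [htilt] with s hs
    simpa only [hs] using (hint (c s)).const_mul _
  have hlim : Tendsto (fun s => (∫ y, exp (s * B w (y - x) - bregman f x y) ∂μ -
      ∫ y, exp (-bregman f x y) ∂μ) / s ^ 2) (𝓝[≠] 0) (𝓝 (C * (1 / 2 * B w w))) := by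
    refine ((tendsto_exp_sub_one_div_sq (tendsto_bregman_swap_div_sq hf hc hc0)).const_mul C).congr'
      ?_
    filter_upwards [htilt.filter_mono nhdsWithin_le_nhds] with s hs
    simp only [hs, integral_const_mul, hZ]
    ring
  obtain ⟨hint', hle⟩ := integral_sq_mul_exp_neg_le (Continuous.aestronglyMeasurable (by fun_prop))
    htilt_int hlim
  exact ⟨hint', hle.trans_eq (by ring)⟩

theorem integral_hessian_mul_exp_neg_bregman_le (hf : ContDiff ℝ 2 f)
    (hint : ∀ x, Integrable (fun y => exp (-bregman f x y)) μ)
    (hZ : ∀ x, ∫ y, exp (-bregman f x y) ∂μ = C)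
    (hpos : ∀ z ≠ 0, 0 < fderiv ℝ (fderiv ℝ f) x z z) :
    Integrable (fun y =>
        1 / 2 * fderiv ℝ (fderiv ℝ f) x (y - x) (y - x) * exp (-bregman f x y)) μ ∧
      ∫ y, 1 / 2 * fderiv ℝ (fderiv ℝ f) x (y - x) (y - x) * exp (-bregman f x y) ∂μ ≤
        finrank ℝ E / 2 * C := by
  have hmoment := integral_hessian_sq_mul_exp_neg_bregman_le hf hint hZ hpos
  have hsymm := hessian_apply_comm hf x
  set B := fderiv ℝ (fderiv ℝ f) x
  obtain ⟨v, hv, hsum⟩ := exists_basis_sum_sq_eq_of_pos (B := B.toBilinForm) ⟨hsymm⟩ hpos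
  simp only [ContinuousLinearMap.toBilinForm_apply] at hv hsum
  have hexpand : ∀ y, 1 / 2 * B (y - x) (y - x) * exp (-bregman f x y) =
      ∑ i, 1 / 2 * (B (v i) (y - x) ^ 2 * exp (-bregman f x y)) := by
    intro y
    rw [hsum, Finset.mul_sum, Finset.sum_mul]
    exact Finset.sum_congr rfl fun i _ => mul_assoc _ _ _
  simp only [hexpand]
  refine ⟨integrable_finsetSum _ fun i _ => (hmoment (v i)).1.const_mul _, ?_⟩
  rw [integral_finsetSum _ fun i _ => (hmoment (v i)).1.const_mul _]
  calc ∑ i, ∫ y, 1 / 2 * (B (v i) (y - x) ^ 2 * exp (-bregman f x y)) ∂μ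
      ≤ ∑ _ : Fin (finrank ℝ E), 1 / 2 * C := by
        refine Finset.sum_le_sum fun i _ => ?_
        rw [integral_const_mul]
        have := (hmoment (v i)).2
        rw [hv, mul_one] at this
        linarith
    _ = finrank ℝ E / 2 * C := by
        simp only [Finset.sum_const, Finset.card_univ, Fintype.card_fin, nsmul_eq_mul]
        ring

variable [μ.IsAddHaarMeasure]

theorem apply_self_pos_of_integrable_exp_neg {B : E →L[ℝ] E →L[ℝ] ℝ}
    (hsymm : ∀ u v, B u v = B v u) (hB : ∀ z, 0 ≤ B z z)
    (hint : Integrable (fun z => exp (-(1 / 2 * B z z))) μ) {v : E} (hv : v ≠ 0) : 0 < B v v := by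
  refine (hB v).lt_of_ne' fun hzero => ?_
  have hker : B v = 0 := by
    ext z
    have := (B.toBilinForm.apply_apply_same_eq_zero_iff hB ⟨hsymm⟩).1 hzero
    exact congrArg (· z) this
  refine not_integrable_of_periodic hv (by fun_prop) (fun z => exp_pos _) (fun z => ?_) hint
  simp [hsymm z v, hker]

theorem hessian_apply_self_pos (hf : ContDiff ℝ 2 f) (hD : ∀ y, 0 ≤ bregman f x y)
    (hint : Integrable (fun z => exp (-(1 / 2 * fderiv ℝ (fderiv ℝ f) x z z))) μ) {z : E}
    (hz : z ≠ 0) : 0 < fderiv ℝ (fderiv ℝ f) x z z :=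
  apply_self_pos_of_integrable_exp_neg (hessian_apply_comm hf x) (hessian_apply_self_nonneg hf hD)
    hint hz

theorem bregman_eq_half_hessian (hf : ContDiff ℝ 2 f) (hD : ∀ x y, 0 ≤ bregman f x y)
    (hL : ∀ x, HasPowerLaplaceTransform μ (bregman f x) C (finrank ℝ E / 2)) (x : E) :
    (∀ z ≠ 0, 0 < fderiv ℝ (fderiv ℝ f) x z z) ∧
      ∀ y, bregman f x y = 1 / 2 * fderiv ℝ (fderiv ℝ f) x (y - x) (y - x) := by
  have hcont := continuous_bregman hf.continuous x
  obtain ⟨hgauss, hgauss_le⟩ := (hL x).integral_exp_neg_le_of_tendsto_div_sq hcont.measurable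
    fun z => (tendsto_bregman_div_sq hf (hasDerivAt_add_smul_const x z 0) (by simp)).mono_left
      (nhdsWithin_mono 0 fun s hs => ne_of_gt hs)
  have hpos : ∀ z ≠ 0, 0 < fderiv ℝ (fderiv ℝ f) x z z := fun z =>
    hessian_apply_self_pos hf (hD x) hgauss
  obtain ⟨henergy, henergy_le⟩ := integral_hessian_mul_exp_neg_bregman_le hf
    (fun x => (hL x).integrable_exp_neg) (fun x => (hL x).integral_exp_neg) hpos
  set B := fderiv ℝ (fderiv ℝ f) x
  rw [← integral_sub_right_eq_self (fun z => exp (-(1 / 2 * B z z))) x,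
    ← (hL x).integral_exp_neg] at hgauss_le
  rw [← (hL x).integral_mul_exp_neg] at henergy_le
  have hae := ae_eq_of_integral_exp_neg_le (hL x).integrable_exp_neg (hgauss.comp_sub_right x)
    (hL x).integrable_mul_exp_neg henergy hgauss_le henergy_le
  exact ⟨hpos, congrFun ((Continuous.ae_eq_iff_eq μ hcont (by fun_prop)).1 hae)⟩

end Rigidity

section QuadraticForm

open Module

variable {E : Type*} [NormedAddCommGroup E] [NormedSpace ℝ E] [FiniteDimensional ℝ E]

theorem differentiable_quadraticForm (Q : QuadraticForm ℝ E) : Differentiable ℝ Q := by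
  set B := (QuadraticMap.associated (R := ℝ) Q).toContinuousBilinearMap
  have hB : ∀ z, Q z = B z z := fun z => (QuadraticMap.associated_eq_self_apply ℝ Q z).symm
  rw [funext hB]
  fun_prop

theorem fderiv_quadraticForm (Q : QuadraticForm ℝ E) (x v : E) :
    fderiv ℝ Q x v = QuadraticMap.polar Q x v :=
  ((differentiable_quadraticForm Q x).hasFDerivAt.hasLineDerivAt v).unique (Q.hasLineDerivAt x v)

theorem exists_pos_mul_norm_sq_le {Q : QuadraticForm ℝ E} (hQ : Q.PosDef) :
    ∃ m, 0 < m ∧ ∀ z, m * ‖z‖ ^ 2 ≤ Q z := by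
  obtain ⟨m, hm, hmin⟩ := (isCompact_sphere (0 : E) 1).exists_forall_le'
    (differentiable_quadraticForm Q).continuous.continuousOn
    fun z hz => hQ z (ne_zero_of_mem_unit_sphere ⟨z, hz⟩)
  refine ⟨m, hm, fun z => ?_⟩
  rcases eq_or_ne z 0 with rfl | hz
  · simp
  have hnorm := norm_ne_zero_iff.2 hz
  calc m * ‖z‖ ^ 2 ≤ Q (‖z‖⁻¹ • z) * ‖z‖ ^ 2 := by
        gcongr
        exact hmin _ (by simp [norm_smul, hnorm])
    _ = Q z := by
        rw [QuadraticMap.map_smul, smul_eq_mul]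
        field_simp

variable [MeasurableSpace E] [BorelSpace E] (μ : Measure E) [μ.IsAddHaarMeasure]

theorem integral_max_one_sub_quadraticForm_pos {Q : QuadraticForm ℝ E} (hQ : Q.PosDef) :
    0 < ∫ z, max (1 - Q z) 0 ∂μ := by
  have hcont := (differentiable_quadraticForm Q).continuous
  obtain ⟨m, hm, hcoercive⟩ := exists_pos_mul_norm_sq_le hQ
  have hsupp : HasCompactSupport fun z => max (1 - Q z) 0 := by
    refine HasCompactSupport.intro (isCompact_closedBall (0 : E) (√m⁻¹)) fun z hz => ?_
    rw [mem_closedBall_zero_iff, not_le, Real.sqrt_lt (by positivity) (norm_nonneg z),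
      inv_lt_iff_one_lt_mul₀' hm] at hz
    exact max_eq_right (sub_nonpos.2 (hz.le.trans (hcoercive z)))
  exact (Continuous.integral_pos_of_hasCompactSupport_nonneg_nonzero (by fun_prop) hsupp
    (fun z => le_max_right _ _) (x := 0) (by simp))

theorem integral_max_sub_quadraticForm (Q : QuadraticForm ℝ E) {k : ℝ} (hk : 0 < k) :
    ∫ z, max (k - Q z) 0 ∂μ =
      (∫ z, max (1 - Q z) 0 ∂μ) * k ^ (((finrank ℝ E : ℝ) + 2) / 2) := by
  have hscale : ∀ z, max (k - Q (√k • z)) 0 = k * max (1 - Q z) 0 := by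
    intro z
    rw [QuadraticMap.map_smul, Real.mul_self_sqrt hk.le, smul_eq_mul, mul_max_of_nonneg _ _ hk.le,
      mul_zero, mul_sub, mul_one]
  have h := Measure.integral_comp_smul μ (fun z => max (k - Q z) 0) √k
  simp only [hscale] at h
  rw [integral_const_mul, abs_of_pos (by positivity), smul_eq_mul,
    eq_inv_mul_iff_mul_eq₀ (by positivity)] at h
  rw [← h, add_div, div_self two_ne_zero, Real.rpow_add hk, Real.rpow_one, Real.sqrt_eq_rpow,
    ← Real.rpow_natCast, ← Real.rpow_mul hk.le, one_div_mul_eq_div]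
  ring

end QuadraticForm

section Paraboloid

open Module

variable {E : Type*} [NormedAddCommGroup E] [NormedSpace ℝ E]

/-- The graph of `f` is an elliptic paraboloid: `f` is a positive definite quadratic form plus an
affine function, stated without coordinates so that the base may be any normed space. -/
def IsEllipticParaboloid (f : E → ℝ) : Prop :=
  ∃ (Q : QuadraticForm ℝ E) (ℓ : E →L[ℝ] ℝ) (c : ℝ), Q.PosDef ∧ ∀ x, f x = Q x + ℓ x + c

/-- The volume `V*_x(k)` of the region cut off from the epigraph of `f` by the hyperplane parallel
to the tangent hyperplane at `x` and `k` above it, with `μ` as the volume on the base. -/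
noncomputable def capVolume [MeasurableSpace E] (μ : Measure E) (f : E → ℝ) (x : E) (k : ℝ) : ℝ :=
  ∫ y in {y | f y < f x + fderiv ℝ f x (y - x) + k}, (f x + fderiv ℝ f x (y - x) + k - f y) ∂μ

theorem capVolume_eq_integral_max [MeasurableSpace E] [BorelSpace E] (μ : Measure E) {f : E → ℝ}
    (hf : Continuous f) (x : E) (k : ℝ) :
    capVolume μ f x k = ∫ y, max (k - bregman f x y) 0 ∂μ := by
  rw [← setIntegral_lt_sub_eq_integral_max (continuous_bregman hf x).measurable]
  have hset : {y | f y < f x + fderiv ℝ f x (y - x) + k} = {y | bregman f x y < k} := by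
    ext y
    simp only [bregman, Set.mem_ofPred_eq]
    constructor <;> intro h <;> linarith
  rw [capVolume, hset]
  congr 1
  ext y
  rw [bregman]
  ring

variable [FiniteDimensional ℝ E] {f : E → ℝ}

theorem bregman_quadraticForm_add_affine {Q : QuadraticForm ℝ E} {ℓ : E →L[ℝ] ℝ} {c : ℝ}
    (h : ∀ x, f x = Q x + ℓ x + c) (x y : E) : bregman f x y = Q (y - x) := by
  have hderiv : HasFDerivAt f (fderiv ℝ Q x + ℓ) x := by
    rw [funext h]
    exact ((differentiable_quadraticForm Q x).hasFDerivAt.add ℓ.hasFDerivAt).add_const c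
  have hexpand : Q y = Q x + Q (y - x) + QuadraticMap.polar Q x (y - x) := by
    rw [← QuadraticMap.map_add, add_sub_cancel]
  rw [bregman, hderiv.fderiv, add_apply, fderiv_quadraticForm, h, h, hexpand, map_sub ℓ]
  ring

variable [MeasurableSpace E] [BorelSpace E] {μ : Measure E} [μ.IsAddHaarMeasure]

theorem IsEllipticParaboloid.exists_capVolume_eq (hf : Continuous f) (h : IsEllipticParaboloid f) :
    ∃ a, 0 < a ∧ ∀ x k, 0 < k → capVolume μ f x k = a * k ^ (((finrank ℝ E : ℝ) + 2) / 2) := by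
  obtain ⟨Q, ℓ, c, hQ, hfQ⟩ := h
  refine ⟨∫ z, max (1 - Q z) 0 ∂μ, integral_max_one_sub_quadraticForm_pos μ hQ, fun x k hk => ?_⟩
  rw [capVolume_eq_integral_max μ hf]
  simp only [bregman_quadraticForm_add_affine hfQ]
  rw [integral_sub_right_eq_self (fun z => max (k - Q z) 0), integral_max_sub_quadraticForm μ Q hk]

theorem isEllipticParaboloid_of_capVolume_eq (hf : ContDiff ℝ 2 f) {a : ℝ} (ha : 0 < a)
    (h : ∀ x k, 0 < k → capVolume μ f x k = a * k ^ (((finrank ℝ E : ℝ) + 2) / 2)) :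
    IsEllipticParaboloid f := by
  have hcont := continuous_bregman hf.continuous
  have hm : (0 : ℝ) < ((finrank ℝ E : ℝ) + 2) / 2 := by positivity
  simp only [capVolume_eq_integral_max μ hf.continuous] at h
  have hnonneg : ∀ x y, 0 ≤ bregman f x y := fun x y =>
    (isClosed_Ici.preimage (hcont x)).closure_subset
      (Measure.dense_of_ae (ae_nonneg_of_power_law (hcont x).measurable ha hm (h x)) y)
  have hlaplace : ∀ x, HasPowerLaplaceTransform μ (bregman f x)
      (a * Real.Gamma (((finrank ℝ E : ℝ) + 2) / 2 + 1)) (finrank ℝ E / 2) := fun x => by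
    have := hasPowerLaplaceTransform_of_power_law (hcont x).measurable ha hm (h x)
    rwa [show ((finrank ℝ E : ℝ) + 2) / 2 - 1 = finrank ℝ E / 2 by ring] at this
  obtain ⟨hpos, hquad⟩ := bregman_eq_half_hessian hf hnonneg hlaplace 0
  set B := fderiv ℝ (fderiv ℝ f) 0
  refine ⟨((1 / 2 : ℝ) • B.toBilinForm).toQuadraticMap, fderiv ℝ f 0, f 0, fun z hz => ?_,
    fun x => ?_⟩
  · simpa using hpos z hz
  · have := hquad x
    simp only [bregman, sub_zero] at this
    simp only [LinearMap.BilinMap.toQuadraticMap_smul, smul_apply,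
      LinearMap.BilinMap.toQuadraticMap_apply, ContinuousLinearMap.toBilinForm_apply, smul_eq_mul]
    linarith

variable (μ) in
theorem elliptic_paraboloid_iff_volume_power_general (hf : ContDiff ℝ 2 f) :
    IsEllipticParaboloid f ↔
      ∃ a, 0 < a ∧ ∀ x k, 0 < k → capVolume μ f x k = a * k ^ (((finrank ℝ E : ℝ) + 2) / 2) :=
  ⟨fun h => h.exists_capVolume_eq hf.continuous,
    fun ⟨_, ha, h⟩ => isEllipticParaboloid_of_capVolume_eq hf ha h⟩

end Paraboloid

section Matrix

variable {ι : Type*} [Fintype ι]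

theorem bilinForm_apply_eq_sum [DecidableEq ι]
    (B : LinearMap.BilinForm ℝ (EuclideanSpace ℝ ι)) (x : EuclideanSpace ℝ ι) :
    B x x = ∑ i, ∑ j, B.toMatrix (EuclideanSpace.basisFun ι ℝ).toBasis i j * x i * x j := by
  conv_lhs => rw [← Matrix.toBilin_toMatrix (EuclideanSpace.basisFun ι ℝ).toBasis B,
    Matrix.toBilin_apply]
  simp [mul_comm, mul_left_comm]

theorem isEllipticParaboloid_iff_exists_matrix {f : EuclideanSpace ℝ ι → ℝ} :
    IsEllipticParaboloid f ↔
      ∃ (A : Matrix ι ι ℝ) (b : EuclideanSpace ℝ ι) (c : ℝ),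
        A.PosDef ∧ ∀ x, f x = (∑ i, ∑ j, A i j * x i * x j) + (∑ i, b i * x i) + c := by
  classical
  set e := (EuclideanSpace.basisFun ι ℝ).toBasis
  have hlinear : ∀ b x : EuclideanSpace ℝ ι,
      InnerProductSpace.toDual ℝ _ b x = ∑ i, b i * x i := fun b x => by
    simp [PiLp.inner_apply, mul_comm]
  constructor
  · rintro ⟨Q, ℓ, c, hQ, hf⟩
    refine ⟨LinearMap.BilinForm.toMatrix e (QuadraticMap.associated (R := ℝ) Q),
      (InnerProductSpace.toDual ℝ _).symm ℓ, c, ?_, fun x => ?_⟩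
    · rwa [← LinearMap.BilinForm.posDef_toQuadraticMap_iff_matrix e _
        (LinearMap.BilinForm.isSymm_iff.2 (QuadraticForm.associated_isSymm ℝ Q)),
        QuadraticMap.toQuadraticMap_associated]
    · rw [← bilinForm_apply_eq_sum, ← hlinear, LinearIsometryEquiv.apply_symm_apply,
        QuadraticMap.associated_eq_self_apply, hf]
  · rintro ⟨A, b, c, hA, hf⟩
    refine ⟨(Matrix.toBilin e A).toQuadraticMap, InnerProductSpace.toDual ℝ _ b, c, ?_, fun x => ?_⟩
    · rwa [LinearMap.BilinForm.posDef_toQuadraticMap_iff_matrix e _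
        ((Matrix.isSymm_toBilin_iff_isSymm e).2 (Matrix.isHermitian_iff_isSymm.1 hA.1)),
        LinearMap.BilinForm.toMatrix_toBilin]
    · rw [hlinear, hf, LinearMap.BilinMap.toQuadraticMap_apply, bilinForm_apply_eq_sum,
        LinearMap.BilinForm.toMatrix_toBilin]

end Matrix

theorem elliptic_paraboloid_iff_volume_power (n : ℕ) (hn : 1 ≤ n)
    (f : EuclideanSpace ℝ (Fin n) → ℝ)
    (hf : ContDiff ℝ (⊤ : ℕ∞) f) (hconv : ConvexOn ℝ Set.univ f)
    (hhess : ∀ x, (hessianMatrix f x).PosDef) :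
    (∃ (A : Matrix (Fin n) (Fin n) ℝ) (b : EuclideanSpace ℝ (Fin n)) (c : ℝ),
      A.PosDef ∧ ∀ x, f x = (∑ i, ∑ j, A i j * x i * x j) + (∑ i, b i * x i) + c) ↔
    (∃ a : ℝ, 0 < a ∧ ∀ (x : EuclideanSpace ℝ (Fin n)) (k : ℝ), 0 < k →
      (∫ y in {y | f y < f x + ⟪gradient f x, y - x⟫ + k},
        (f x + ⟪gradient f x, y - x⟫ + k - f y)) = a * k ^ (((n : ℝ) + 2) / 2)) := by
  simpa only [isEllipticParaboloid_iff_exists_matrix, capVolume, inner_gradient_left,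
    finrank_euclideanSpace_fin]
    using elliptic_paraboloid_iff_volume_power_general volume (contDiff_infty.1 hf 2)
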